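/- Let R be a Noetherian commutative ring, S = R[x_1,...,x_n] the polynomial ring over R, k an integer with 0 ≤ k < n, and J = (I_1 x_1, ..., I_k x_k, {x_i x_j : 1 ≤ i < j ≤ n}) ⊆ S, where I_1,...,I_k are ideals of R. Then the element x = x_1 + x_2 + ... + x_n is a non-zerodivisor on S/J. -/

import Mathlib

set_option maxHeartbeats 1000000
set_option synthInstance.maxHeartbeats 400000

open MvPolynomial

/-- Let `R` be Noetherian, `S = R[x_1,…,x_n]`, `0 ≤ k < n`, and
`J = (I_1 x_1, …, I_k x_k, {x_i x_j : 1 ≤ i < j ≤ n})` where `I_1,…,I_k` are ideals of `R`.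
Then `x = x_1 + ⋯ + x_n` is a non-zerodivisor on `S/J`. -/
theorem sum_vars_nonzerodivisor {R : Type*} [CommRing R] [IsNoetherianRing R]
    {n k : ℕ} (hk : k < n) (I : Fin k → Ideal R)
    (J : Ideal (MvPolynomial (Fin n) R))
    (hJ : J = Ideal.span
      ({p | ∃ (i : Fin k) (a : R), a ∈ I i ∧ p = C a * X (Fin.castLE hk.le i)} ∪
       {p | ∃ i j : Fin n, i < j ∧ p = X i * X j})) :
    ∀ f : MvPolynomial (Fin n) R, (∑ i : Fin n, X i) * f ∈ J → f ∈ J := by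
  classical
  intro f hf
  let L : Fin n → Ideal R := fun i => if h : (i : ℕ) < k then I ⟨i, h⟩ else ⊥
  -- coefficients of pure powers of elements of J
  have key : ∀ p ∈ J, ∀ (i : Fin n) (m : ℕ), coeff (Finsupp.single i m) p ∈ L i := by
    intro p hp
    rw [hJ] at hp
    induction hp using Submodule.span_induction with
    | zero => intro i m; simp
    | add p q _ _ hp hq => intro i m; rw [coeff_add]; exact add_mem (hp i m) (hq i m)
    | smul q p _ hp =>
      intro i m
      rw [smul_eq_mul, coeff_mul]
      refine Ideal.sum_mem _ fun ab hab => Ideal.mul_mem_left _ _ ?_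
      rw [Finset.HasAntidiagonal.mem_antidiagonal] at hab
      have hb : ab.2 = Finsupp.single i (ab.2 i) := by
        ext j
        have h := DFunLike.congr_fun hab j
        by_cases hij : i = j
        · subst hij; simp
        · simp [Finsupp.single_apply, hij] at h ⊢
          exact h.2
      rw [hb]
      exact hp i _
    | mem p hp =>
      intro i m
      rcases hp with ⟨l, a, ha, rfl⟩ | ⟨a, b, hab, rfl⟩
      · rw [coeff_C_mul, coeff_X]
        split_ifs with h
        · have hi : i = Fin.castLE hk.le l := by
            by_contra hne
            have := DFunLike.congr_fun h (Fin.castLE hk.le l)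
            simp [Finsupp.single_apply, hne] at this
          subst hi
          have : L (Fin.castLE hk.le l) = I l := by simp [L]
          rw [this, mul_one]; exact ha
        · simp
      · rw [coeff_X_mul', coeff_X]
        split_ifs with h1 h2
        · exfalso
          have hia : i = a := by
            by_contra hne
            simp [Finsupp.single_apply, hne] at h1
          subst hia
          have := DFunLike.congr_fun h2 b
          simp [Finsupp.single_apply, hab.ne] at this
        · simp
        · simp
  have hc : ∀ (i : Fin n) (m : ℕ), coeff (Finsupp.single i m) f ∈ L i := by
    intro i m
    have h := key _ hf i (m + 1)
    rw [Finset.sum_mul, coeff_sum, Finset.sum_eq_single i] at h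
    · rw [coeff_X_mul'] at h
      rw [if_pos (by simp)] at h
      rwa [← Finsupp.single_tsub, Nat.add_sub_cancel] at h
    · intro j _ hj
      rw [coeff_X_mul', if_neg]
      simp [Finsupp.single_apply, hj.symm]
    · simp
  have h0 : coeff 0 f = 0 := by
    have h := hc ⟨k, hk⟩ 0
    simpa [L] using h
  rw [f.as_sum]
  refine Ideal.sum_mem _ fun s _ => ?_
  by_cases hs : ∃ i j : Fin n, i < j ∧ s i ≠ 0 ∧ s j ≠ 0
  · obtain ⟨i, j, hij, hi, hj⟩ := hs
    have hmem : (X i * X j : MvPolynomial (Fin n) R) ∈ J := by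
      rw [hJ]; exact Ideal.subset_span (Or.inr ⟨i, j, hij, rfl⟩)
    refine Ideal.mem_of_dvd _ ?_ hmem
    have hle : Finsupp.single i 1 + Finsupp.single j 1 ≤ s := by
      intro l
      simp only [Finsupp.add_apply, Finsupp.single_apply]
      have := hij.ne
      split_ifs with h1 h2 h2
      · exact absurd (h1.trans h2.symm) this
      · subst h1; omega
      · subst h2; omega
      · omega
    refine ⟨monomial (s - (Finsupp.single i 1 + Finsupp.single j 1)) (coeff s f), ?_⟩
    rw [X, X, monomial_mul, monomial_mul, add_tsub_cancel_of_le hle]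
    simp
  · by_cases hz : s = 0
    · subst hz; rw [h0]; simp
    · obtain ⟨i, hi⟩ := Finsupp.ne_iff.mp hz
      have hsi : s = Finsupp.single i (s i) := by
        ext j
        by_cases hij : i = j
        · subst hij; simp
        · rw [Finsupp.single_apply, if_neg hij]
          by_contra hj
          rcases lt_or_gt_of_ne hij with h | h
          · exact hs ⟨i, j, h, hi, hj⟩
          · exact hs ⟨j, i, h, hj, hi⟩
      have hcs := hc i (s i)
      rw [← hsi] at hcs
      by_cases hik : (i : ℕ) < k
      · have hL : L i = I ⟨i, hik⟩ := by simp [L, hik]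
        rw [hL] at hcs
        have hmem : (C (coeff s f) * X i : MvPolynomial (Fin n) R) ∈ J := by
          rw [hJ]; exact Ideal.subset_span (Or.inl ⟨⟨i, hik⟩, _, hcs, rfl⟩)
        refine Ideal.mem_of_dvd _ ?_ hmem
        have hi' : s i ≠ 0 := hi
        refine ⟨X i ^ (s i - 1), ?_⟩
        rw [mul_assoc, ← pow_succ', Nat.sub_add_cancel (Nat.pos_of_ne_zero hi'),
          C_mul_X_pow_eq_monomial, ← hsi]
      · have hL : L i = ⊥ := by simp [L, hik]
        rw [hL, Ideal.mem_bot] at hcs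
        rw [hcs]; simp
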